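/- Let (r_n) be a sequence of positive integers such that r_n ≥ (n log n)/2 + c_n n for some sequence c_n → ∞. For each n, let D^{r_n}_n be the number of descents of the random permutation of [n] obtained by performing r_n iterated random-to-top shuffles starting from the identity. Then (D^{r_n}_n − n/2)/√n converges in distribution, as n → ∞, to a centered normal random variable with variance 1/12. -/

import Mathlib

open MeasureTheory ProbabilityTheory Filter Finset Topology
open scoped NNReal

/-- Move card `c` to the top (position `0`) of the deck `π`
(where `π i` is the card in position `i`). -/
def moveToTop {n : ℕ} (c : Fin n) (π : Equiv.Perm (Fin n)) : Equiv.Perm (Fin n) :=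
  π * ((π⁻¹ c).cycleRange)⁻¹

/-- The permutation (position `i` ↦ card in position `i`) obtained after performing
iterated random-to-top moves with selected cards `s 0, s 1, …`, starting from the
identity deck `(1, 2, …, n)`. -/
def rttPerm (n r : ℕ) (s : Fin r → Fin n) : Equiv.Perm (Fin n) :=
  (List.ofFn s).foldl (fun π c => moveToTop c π) 1

/-- Number of fixed points of a permutation. -/
def fixedPointCount {n : ℕ} (π : Equiv.Perm (Fin n)) : ℕ :=
  (Finset.univ.filter fun i => π i = i).card

/-- Number of descents of a permutation. -/
def descentCount {n : ℕ} (π : Equiv.Perm (Fin n)) : ℕ :=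
  (Finset.univ.filter fun p : Fin n × Fin n =>
    (p.1 : ℕ) + 1 = (p.2 : ℕ) ∧ π p.2 < π p.1).card

/-- Number of inversions of a permutation. -/
def inversionCount {n : ℕ} (π : Equiv.Perm (Fin n)) : ℕ :=
  (Finset.univ.filter fun p : Fin n × Fin n => p.1 < p.2 ∧ π p.2 < π p.1).card

/-- The number of distinct values among `s 0, …, s (r-1)` (the occupancy count `K^r_n`). -/
def distinctCount (n r : ℕ) (s : Fin r → Fin n) : ℕ :=
  (Finset.univ.image s).card

/-- Probability of the event `p` under the uniform distribution on the finite type `α`. -/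
noncomputable def unifProb {α : Type*} [Fintype α] (p : α → Prop) : ℝ :=
  (Nat.card {x : α // p x} : ℝ) / (Fintype.card α : ℝ)

/-- Expectation of `f` under the uniform distribution on the finite type `α`. -/
noncomputable def unifExpect {α : Type*} [Fintype α] (f : α → ℝ) : ℝ :=
  (∑ x, f x) / (Fintype.card α : ℝ)

/-- Variance of `f` under the uniform distribution on the finite type `α`. -/
noncomputable def unifVar {α : Type*} [Fintype α] (f : α → ℝ) : ℝ :=
  unifExpect fun x => (f x - unifExpect f) ^ 2

/-- `max_{1 ≤ i ≤ k} π(i)`: the maximum card value (in `{1, …, n}`, i.e. `val + 1`)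
among the first `k` positions of `π`. -/
def maxFirst (n k : ℕ) (π : Equiv.Perm (Fin n)) : ℕ :=
  (Finset.univ.filter fun i : Fin n => (i : ℕ) < k).sup fun i => (π i : ℕ) + 1

/-- The number of fixed points among the first `k` positions of `π`. -/
def fixedFirst (n k : ℕ) (π : Equiv.Perm (Fin n)) : ℕ :=
  (Finset.univ.filter fun i : Fin n => (i : ℕ) < k ∧ π i = i).card

/-!
Relabelling the selections `s` by a permutation `τ` of the cards gives a coupling of the shuffle
with a uniform deck: the decks produced by `τ ∘ s` and by `τ * rttPerm n r s` agree on the cards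
selected so far, which lie on top, so their descent counts differ by at most the number of cards
never selected. That number is on average at most `n * exp (-r / n)`, hence at most `√n * exp (-c)`
when `r ≥ n * log n / 2 + c * n`, which is negligible on the scale `√n`.

For a uniform deck, the descents can be read off an i.i.d. uniform sequence in `[0, 1)`. Partial
sums of independent uniform points of the circle `ℝ / ℤ` form such a sequence, and it descends
exactly where the addition carries. So the number of descents is the sum of `n` independent uniform
variables minus a fractional part, and the central limit theorem applies with variance `1 / 12`.
-/

open scoped BigOperators BoundedContinuousFunction

section Descents

variable {α β : Type*} {n : ℕ}

/-- The number of descents of a finite sequence, so that descents of permutations can be compared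
with descents of sequences of reals. The indexing by pairs of adjacent positions is that of
`descentCount`. -/
def seqDescentCount [LT α] [DecidableLT α] (v : Fin n → α) : ℕ :=
  #{p : Fin n × Fin n | (p.1 : ℕ) + 1 = (p.2 : ℕ) ∧ v p.2 < v p.1}

lemma descentCount_eq_seqDescentCount (π : Equiv.Perm (Fin n)) :
    descentCount π = seqDescentCount π := rfl

lemma seqDescentCount_congr [LT α] [DecidableLT α] [LT β] [DecidableLT β] {v : Fin n → α}
    {w : Fin n → β} (h : ∀ i j, v i < v j ↔ w i < w j) :
    seqDescentCount v = seqDescentCount w := by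
  simp only [seqDescentCount, h]

lemma card_adjacent_le (n k : ℕ) :
    #{p : Fin n × Fin n | (p.1 : ℕ) + 1 = (p.2 : ℕ) ∧ k ≤ (p.2 : ℕ)} ≤ n - k := by
  rw [← Nat.card_Ico]
  refine card_le_card_of_injOn (fun p => (p.2 : ℕ)) (fun p hp => ?_) fun p hp q hq hpq => ?_
  · simp only [coe_filter, mem_univ, true_and, Set.mem_ofPred_eq] at hp
    simpa using hp.2
  · simp only [coe_filter, mem_univ, true_and, Set.mem_ofPred_eq] at hp hq hpq
    ext <;> omega

variable [LT α] [DecidableLT α]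

lemma seqDescentCount_le_add_of_eqOn {v w : Fin n → α} {k : ℕ}
    (h : ∀ i : Fin n, (i : ℕ) < k → v i = w i) :
    seqDescentCount v ≤ seqDescentCount w + (n - k) := by
  refine (card_le_card fun p hp => ?_).trans
    ((card_union_le _ _).trans (Nat.add_le_add_left (card_adjacent_le n k) _))
  simp only [mem_filter, mem_univ, true_and, mem_union] at hp ⊢
  rcases le_or_gt k p.2 with hk | hk
  · exact .inr ⟨hp.1, hk⟩
  · rw [← h p.1 (by lia), ← h p.2 hk]
    exact .inl hp

lemma abs_seqDescentCount_sub_le_of_eqOn {v w : Fin n → α} {k : ℕ}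
    (h : ∀ i : Fin n, (i : ℕ) < k → v i = w i) :
    |(seqDescentCount v : ℝ) - seqDescentCount w| ≤ (n - k : ℕ) := by
  have hvw : (seqDescentCount v : ℝ) ≤ seqDescentCount w + (n - k : ℕ) :=
    mod_cast seqDescentCount_le_add_of_eqOn h
  have hwv : (seqDescentCount w : ℝ) ≤ seqDescentCount v + (n - k : ℕ) :=
    mod_cast seqDescentCount_le_add_of_eqOn fun i hi => (h i hi).symm
  rw [abs_sub_le_iff]
  constructor <;> linarith

lemma seqDescentCount_le (v : Fin n → α) : seqDescentCount v ≤ n := by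
  refine (card_le_card ?_).trans (card_adjacent_le n 0)
  exact monotone_filter_right _ fun p _ hp => ⟨hp.1, Nat.zero_le _⟩

lemma seqDescentCount_natCast (w : ℕ → α) (m : ℕ) :
    seqDescentCount (fun i : Fin (m + 1) => w i) = #{k ∈ range m | w (k + 1) < w k} := by
  refine card_bij (fun p _ => (p.1 : ℕ)) (fun p hp => ?_) (fun p hp q hq hpq => ?_) fun k hk => ?_
  · simp only [mem_filter, mem_univ, true_and, mem_range] at hp ⊢
    exact ⟨by lia, hp.1 ▸ hp.2⟩
  · simp only [mem_filter, mem_univ, true_and] at hp hq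
    ext <;> lia
  · simp only [mem_filter, mem_range] at hk
    exact ⟨(⟨k, by lia⟩, ⟨k + 1, by lia⟩), by simpa using hk.2, rfl⟩

end Descents

section MoveToFront

variable {α β : Type*} [DecidableEq α] [DecidableEq β]

/-- The list version of `moveToTop`. Unlike a permutation, the list need not contain every card:
started from the empty list, it records the cards selected so far, the most recent ones first. -/
def toFront (l : List α) (c : α) : List α := c :: l.erase c

lemma foldl_toFront_isPrefix (s : List α) {l₁ l₂ : List α} (h : l₁ <+: l₂) :
    s.foldl toFront l₁ <+: s.foldl toFront l₂ := by
  induction s generalizing l₁ l₂ with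
  | nil => exact h
  | cons c _ ih => exact ih (List.cons_prefix_cons.2 ⟨rfl, h.erase c⟩)

lemma map_foldl_toFront {f : α → β} (hf : Function.Injective f) (s l : List α) :
    (s.foldl toFront l).map f = (s.map f).foldl toFront (l.map f) := by
  induction s generalizing l with
  | nil => rfl
  | cons c s ih => simp [ih, toFront, List.map_erase hf]

lemma nodup_foldl_toFront (s : List α) {l : List α} (hl : l.Nodup) :
    (s.foldl toFront l).Nodup := by
  induction s generalizing l with
  | nil => exact hl
  | cons c _ ih => exact ih (List.nodup_cons.2 ⟨hl.not_mem_erase, hl.erase c⟩)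

lemma mem_foldl_toFront {s l : List α} {a : α} : a ∈ s.foldl toFront l ↔ a ∈ s ∨ a ∈ l := by
  induction s generalizing l with
  | nil => simp
  | cons c s ih =>
    have hmem : a ∈ toFront l c ↔ a = c ∨ a ∈ l := by
      rcases eq_or_ne a c with rfl | hac
      · simp [toFront]
      · simp [toFront, hac, List.mem_erase_of_ne hac]
    simp only [List.foldl_cons, ih, hmem, List.mem_cons]
    tauto

lemma length_foldl_toFront_nil (s : List α) : (s.foldl toFront []).length = #s.toFinset := by
  rw [← List.toFinset_card_of_nodup (nodup_foldl_toFront s List.nodup_nil)]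
  congr 1
  ext a
  simp [mem_foldl_toFront]

end MoveToFront

section Coupling

variable {n r : ℕ}

lemma ofFn_moveToTop (c : Fin n) (π : Equiv.Perm (Fin n)) :
    List.ofFn (moveToTop c π) = toFront (List.ofFn π) c := by
  obtain _ | m := n
  · exact c.elim0
  obtain ⟨p, rfl⟩ := π.surjective c
  have hzero : moveToTop (π p) π 0 = π p := by
    simp [moveToTop, Equiv.Perm.inv_def, Fin.cycleRange_symm_zero]
  have hsucc (j : Fin m) : moveToTop (π p) π j.succ = π (p.succAbove j) := by
    simp [moveToTop, Equiv.Perm.inv_def, Fin.cycleRange_symm_succ]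
  have herase : (List.ofFn π).erase (π p) = (List.ofFn π).eraseIdx p := by
    rw [← (List.nodup_ofFn.2 π.injective).erase_getElem p (by simp [p.is_le]), List.getElem_ofFn]
  rw [List.ofFn_succ, hzero, toFront, herase]
  congr 1
  refine List.ext_getElem (by simp [List.length_eraseIdx, p.is_le]) fun j hj _ => ?_
  simp only [List.getElem_ofFn, hsucc, List.getElem_eraseIdx, Fin.succAbove, Fin.lt_def]
  split_ifs <;> simp_all

lemma ofFn_foldl_moveToTop (s : List (Fin n)) (π : Equiv.Perm (Fin n)) :
    List.ofFn ⇑(s.foldl (fun (ρ : Equiv.Perm (Fin n)) c => moveToTop c ρ) π) =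
      s.foldl toFront (List.ofFn π) := by
  induction s generalizing π with
  | nil => rfl
  | cons c s ih => rw [List.foldl_cons, ih, ofFn_moveToTop, List.foldl_cons]

lemma ofFn_rttPerm (s : Fin r → Fin n) :
    List.ofFn (rttPerm n r s) = (List.ofFn s).foldl toFront (List.finRange n) := by
  rw [rttPerm, ofFn_foldl_moveToTop, Equiv.Perm.coe_one, List.ofFn_id]

lemma toFinset_ofFn_card (s : Fin r → Fin n) :
    #(List.ofFn s).toFinset = distinctCount n r s := by
  rw [distinctCount]
  congr 1
  ext c
  simp [List.mem_ofFn]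

-- Both decks start with the cards `τ (s j)`, the most recently selected ones first.
lemma rttPerm_comp_apply_of_lt (s : Fin r → Fin n) (τ : Equiv.Perm (Fin n)) {i : Fin n}
    (hi : (i : ℕ) < distinctCount n r s) :
    rttPerm n r (τ ∘ s) i = (τ * rttPerm n r s) i := by
  let top : List (Fin n) := ((List.ofFn s).foldl toFront []).map τ
  have hi_top : (i : ℕ) < top.length := by
    simpa [top, length_foldl_toFront_nil, toFinset_ofFn_card] using hi
  have hleft : top <+: List.ofFn (rttPerm n r (τ ∘ s)) := by
    rw [ofFn_rttPerm, ← List.map_ofFn, show top = _ from map_foldl_toFront τ.injective _ _]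
    exact foldl_toFront_isPrefix _ List.nil_prefix
  have hright : top <+: List.ofFn (τ * rttPerm n r s) := by
    rw [Equiv.Perm.coe_mul, ← List.map_ofFn, ofFn_rttPerm]
    exact (foldl_toFront_isPrefix _ List.nil_prefix).map τ
  simpa using (hleft.getElem hi_top).symm.trans (hright.getElem hi_top)

lemma abs_descentCount_rttPerm_comp_sub_le (s : Fin r → Fin n) (τ : Equiv.Perm (Fin n)) :
    |(descentCount (rttPerm n r (τ ∘ s)) : ℝ) - descentCount (τ * rttPerm n r s)| ≤
      #(univ.image s)ᶜ := by
  rw [card_compl, Fintype.card_fin]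
  exact abs_seqDescentCount_sub_le_of_eqOn fun i hi => rttPerm_comp_apply_of_lt s τ hi

lemma sum_card_compl_image (ι α : Type*) [Fintype ι] [DecidableEq ι] [Fintype α] [DecidableEq α] :
    ∑ s : ι → α, #(univ.image s)ᶜ = Fintype.card α * (Fintype.card α - 1) ^ Fintype.card ι := by
  have hcount (c : α) :
      #{s : ι → α | ∀ i, s i ≠ c} = (Fintype.card α - 1) ^ Fintype.card ι := by
    have : ({s : ι → α | ∀ i, s i ≠ c} : Finset (ι → α)) =
        Fintype.piFinset fun _ => univ.erase c := by
      ext s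
      simp
    simp [this, card_erase_of_mem]
  have hcompl (s : ι → α) : (univ.image s)ᶜ = ({c | ∀ i, s i ≠ c} : Finset α) := by
    ext c
    simp
  calc ∑ s : ι → α, #(univ.image s)ᶜ
      = ∑ s : ι → α, #{c | ∀ i, s i ≠ c} := sum_congr rfl fun s _ => congrArg _ (hcompl s)
    _ = ∑ c, #{s : ι → α | ∀ i, s i ≠ c} :=
        sum_card_bipartiteAbove_eq_sum_card_bipartiteBelow _
    _ = Fintype.card α * (Fintype.card α - 1) ^ Fintype.card ι := by simp [hcount]

lemma expect_card_compl_image_le (ι α : Type*) [Fintype ι] [DecidableEq ι] [Fintype α]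
    [DecidableEq α] [Nonempty α] :
    𝔼 s : ι → α, (#(univ.image s)ᶜ : ℝ) ≤
      Fintype.card α * Real.exp (-(Fintype.card ι / Fintype.card α)) := by
  have hα : (1 : ℝ) ≤ Fintype.card α := mod_cast Fintype.card_pos
  calc 𝔼 s : ι → α, (#(univ.image s)ᶜ : ℝ)
      = Fintype.card α * (1 - (Fintype.card α : ℝ)⁻¹) ^ Fintype.card ι := by
        rw [Fintype.expect_eq_sum_div_card, ← Nat.cast_sum, sum_card_compl_image,
          Fintype.card_fun, Nat.cast_mul, Nat.cast_pow, Nat.cast_pow,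
          Nat.cast_pred Fintype.card_pos, mul_div_assoc, ← div_pow]
        congr 2
        field_simp
    _ ≤ Fintype.card α * Real.exp (-(Fintype.card α : ℝ)⁻¹) ^ Fintype.card ι := by
        gcongr
        · exact sub_nonneg.2 (inv_le_one_of_one_le₀ hα)
        · exact Real.one_sub_le_exp_neg _
    _ = Fintype.card α * Real.exp (-(Fintype.card ι / Fintype.card α)) := by
        rw [← Real.exp_nat_mul, mul_neg, div_eq_mul_inv]

lemma abs_expect_descentCount_rttPerm_sub_le [NeZero n] {F : ℝ → ℝ} {K : ℝ≥0}
    (hF : LipschitzWith K F) :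
    |(𝔼 s, F (descentCount (rttPerm n r s))) - 𝔼 τ : Equiv.Perm (Fin n), F (descentCount τ)| ≤
      K * (n * Real.exp (-(r / n))) := by
  have hshuffle (τ : Equiv.Perm (Fin n)) :
      𝔼 s, F (descentCount (rttPerm n r (τ ∘ s))) = 𝔼 s, F (descentCount (rttPerm n r s)) :=
    Fintype.expect_equiv ((Equiv.refl _).arrowCongr τ) _ _ fun _ => rfl
  have hperm (s : Fin r → Fin n) :
      𝔼 τ, F (descentCount (τ * rttPerm n r s)) = 𝔼 τ, F (descentCount τ) :=
    Fintype.expect_equiv (Equiv.mulRight (rttPerm n r s)) _ _ fun _ => rfl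
  have hcoupling :
      (𝔼 s, F (descentCount (rttPerm n r s))) - 𝔼 τ : Equiv.Perm (Fin n), F (descentCount τ) =
        𝔼 τ : Equiv.Perm (Fin n), 𝔼 s,
          (F (descentCount (rttPerm n r (τ ∘ s))) - F (descentCount (τ * rttPerm n r s))) := by
    simp_rw [expect_sub_distrib, hshuffle]
    rw [Fintype.expect_const, expect_comm]
    simp_rw [hperm, Fintype.expect_const]
  calc _ ≤ 𝔼 τ : Equiv.Perm (Fin n), 𝔼 s,
        |F (descentCount (rttPerm n r (τ ∘ s))) - F (descentCount (τ * rttPerm n r s))| := by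
        rw [hcoupling]
        exact (abs_expect_le _ _).trans (expect_le_expect fun τ _ => abs_expect_le _ _)
    _ ≤ 𝔼 _τ : Equiv.Perm (Fin n), 𝔼 s : Fin r → Fin n, K * (#(univ.image s)ᶜ : ℝ) := by
        gcongr with τ _ s _
        exact (hF.dist_le_mul _ _).trans <|
          mul_le_mul_of_nonneg_left (abs_descentCount_rttPerm_comp_sub_le s τ) K.2
    _ = K * 𝔼 s : Fin r → Fin n, (#(univ.image s)ᶜ : ℝ) := by
        rw [Fintype.expect_const, mul_expect]
    _ ≤ K * (n * Real.exp (-(r / n))) := by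
        gcongr
        simpa using expect_card_compl_image_le (Fin r) (Fin n)

end Coupling

section Exchangeability

variable {α : Type*}

lemma ae_injective_pi {ι : Type*} [Fintype ι] [MeasurableSpace α] [MeasurableEq α]
    (ν : Measure α) [IsProbabilityMeasure ν] [NullSingletonClass ν] :
    ∀ᵐ v ∂Measure.pi (fun _ : ι => ν), Function.Injective v := by
  have hne {i j : ι} (hij : i ≠ j) : ∀ᵐ v ∂Measure.pi (fun _ : ι => ν), v i ≠ v j := by
    have hprod : ∀ᵐ p ∂ν.prod ν, p.1 ≠ p.2 :=
      (Measure.ae_prod_iff_ae_ae measurableSet_diagonal.compl).2 <|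
        ae_of_all _ fun x => (ν.ae_ne x).mono fun _ => Ne.symm
    have hindep : IndepFun (fun v : ι → α => v i) (fun v => v j) (Measure.pi fun _ => ν) :=
      (iIndepFun_pi (X := fun _ => id) fun _ => aemeasurable_id).indepFun hij
    have hmap : (Measure.pi fun _ : ι => ν).map (fun v => (v i, v j)) = ν.prod ν := by
      rw [(indepFun_iff_map_prod_eq_prod_map_map (measurable_pi_apply i).aemeasurable
          (measurable_pi_apply j).aemeasurable).1 hindep,
        (measurePreserving_eval _ i).map_eq, (measurePreserving_eval _ j).map_eq]
    rw [← hmap] at hprod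
    exact ae_of_ae_map (f := fun v : ι → α => (v i, v j)) (by fun_prop) hprod
  have hall : ∀ᵐ v ∂Measure.pi (fun _ : ι => ν), ∀ i j, i ≠ j → v i ≠ v j := by
    simp only [ae_all_iff]
    exact fun i j hij => hne hij
  filter_upwards [hall] with v hv i j hij
  exact not_imp_not.1 (hv i j) hij

variable [LinearOrder α] {n : ℕ}

lemma expect_seqDescentCount_comp_perm (F : ℕ → ℝ) {v : Fin n → α} (hv : Function.Injective v) :
    𝔼 τ : Equiv.Perm (Fin n), F (seqDescentCount (v ∘ τ)) =
      𝔼 τ : Equiv.Perm (Fin n), F (descentCount τ) := by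
  have hmono : StrictMono (v ∘ Tuple.sort v) :=
    (Tuple.monotone_sort v).strictMono_of_injective (hv.comp (Tuple.sort v).injective)
  have hlt (i j : Fin n) : v i < v j ↔ (Tuple.sort v)⁻¹ i < (Tuple.sort v)⁻¹ j := by
    rw [← hmono.lt_iff_lt]
    simp
  refine Fintype.expect_equiv (Equiv.mulLeft (Tuple.sort v)⁻¹) _ _ fun τ => ?_
  rw [descentCount_eq_seqDescentCount]
  exact congrArg F (seqDescentCount_congr fun i j => hlt (τ i) (τ j))

variable [TopologicalSpace α] [OrderClosedTopology α] [SecondCountableTopology α]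
  [MeasurableSpace α] [OpensMeasurableSpace α]

lemma measurable_seqDescentCount : Measurable (seqDescentCount : (Fin n → α) → ℕ) := by
  unfold seqDescentCount
  simp only [card_filter]
  refine Finset.measurable_sum _ fun p _ => Measurable.ite ?_ measurable_const measurable_const
  exact (MeasurableSet.const _).inter
    (measurableSet_lt (measurable_pi_apply p.2) (measurable_pi_apply p.1))

lemma integrable_comp_seqDescentCount (μ : Measure (Fin n → α)) [IsFiniteMeasure μ] (F : ℕ → ℝ) :
    Integrable (fun v => F (seqDescentCount v)) μ := by
  have hF : Measurable fun v : Fin n → α => F (seqDescentCount v) :=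
    (measurable_of_countable F).comp measurable_seqDescentCount
  refine .of_bound hF.aestronglyMeasurable (∑ k ∈ range (n + 1), ‖F k‖) (ae_of_all _ fun v => ?_)
  exact single_le_sum (f := fun k => ‖F k‖) (fun _ _ => norm_nonneg _)
    (mem_range_succ_iff.2 (seqDescentCount_le v))

lemma integral_comp_seqDescentCount_pi (ν : Measure α) [IsProbabilityMeasure ν]
    [NullSingletonClass ν] (F : ℕ → ℝ) :
    ∫ v, F (seqDescentCount v) ∂Measure.pi (fun _ : Fin n => ν) =
      𝔼 τ : Equiv.Perm (Fin n), F (descentCount τ) := by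
  set μ : Measure (Fin n → α) := Measure.pi fun _ => ν
  have hF : Integrable (fun v => F (seqDescentCount v)) μ := integrable_comp_seqDescentCount μ F
  have hpres (τ : Equiv.Perm (Fin n)) : MeasurePreserving (fun v => v ∘ τ) μ μ :=
    measurePreserving_arrowCongr' _ _ τ.symm (.refl α) fun _ => .id ν
  have hrelabel (τ : Equiv.Perm (Fin n)) :
      ∫ v, F (seqDescentCount (v ∘ τ)) ∂μ = ∫ v, F (seqDescentCount v) ∂μ :=
    (hpres τ).hasLaw.integral_comp hF.aestronglyMeasurable
  calc ∫ v, F (seqDescentCount v) ∂μ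
      = 𝔼 τ : Equiv.Perm (Fin n), ∫ v, F (seqDescentCount (v ∘ τ)) ∂μ := by
        simp only [hrelabel, Fintype.expect_const]
    _ = ∫ v, 𝔼 τ : Equiv.Perm (Fin n), F (seqDescentCount (v ∘ τ)) ∂μ := by
        simp only [Fintype.expect_eq_sum_div_card]
        rw [integral_div, integral_finsetSum]
        exact fun τ _ => (hpres τ).integrable_comp_of_integrable hF
    _ = ∫ _v, 𝔼 τ : Equiv.Perm (Fin n), F (descentCount τ) ∂μ := by
        refine integral_congr_ae ?_
        filter_upwards [ae_injective_pi ν] with v hv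
        exact expect_seqDescentCount_comp_perm F hv
    _ = 𝔼 τ : Equiv.Perm (Fin n), F (descentCount τ) := by simp

end Exchangeability

section PartialSums

variable {G : Type*} [AddCommGroup G] {m : ℕ}

lemma sum_Iic_val {M : Type*} [AddCommMonoid M] (f : ℕ → M) (i : Fin m) :
    ∑ j ∈ Iic i, f j = ∑ j ∈ range (i + 1), f j := by
  rw [Nat.range_succ_eq_Iic, ← Fin.map_valEmbedding_Iic, sum_map]
  rfl

lemma surjective_sum_Iic : Function.Surjective fun (v : Fin m → G) i => ∑ j ∈ Iic i, v j := by
  intro w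
  let u : ℕ → G := fun k => k.casesOn 0 (Function.extend Fin.val w 0)
  refine ⟨fun i => u (i + 1) - u i, funext fun i => ?_⟩
  change ∑ j ∈ Iic i, (u (j + 1) - u j) = w i
  rw [sum_Iic_val fun k => u (k + 1) - u k, sum_range_sub]
  simp [u, Fin.val_injective.extend_apply]

variable [TopologicalSpace G] [IsTopologicalAddGroup G] [CompactSpace G]
  [SecondCountableTopology G] [MeasurableSpace G] [BorelSpace G]
  (μ : Measure G) [μ.IsAddHaarMeasure] [IsProbabilityMeasure μ]

lemma measurePreserving_sum_Iic :
    MeasurePreserving (fun (v : Fin m → G) i => ∑ j ∈ Iic i, v j)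
      (Measure.pi fun _ => μ) (Measure.pi fun _ => μ) := by
  let f : (Fin m → G) →+ (Fin m → G) :=
    { toFun := fun v i => ∑ j ∈ Iic i, v j
      map_zero' := funext fun i => by simp
      map_add' := fun v w => funext fun i => by simp [sum_add_distrib] }
  have hf : Continuous f :=
    continuous_pi fun i => continuous_finsetSum _ fun j _ => continuous_apply j
  exact f.measurePreserving hf surjective_sum_Iic (by simp)

lemma measurePreserving_sum_range :
    MeasurePreserving (fun (ω : ℕ → G) (i : Fin m) => ∑ j ∈ range (i + 1), ω j)
      (Measure.infinitePi fun _ => μ) (Measure.pi fun _ => μ) := by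
  have hrestrict : MeasurePreserving (fun (ω : ℕ → G) (i : Fin m) => ω i)
      (Measure.infinitePi fun _ => μ) (Measure.pi fun _ => μ) := by
    refine ⟨by fun_prop, ?_⟩
    rw [Measure.map_infinitePi_infinitePi_of_inj Fin.val_injective, Measure.infinitePi_eq_pi]
  simpa only [Function.comp_def, sum_Iic_val] using (measurePreserving_sum_Iic μ).comp hrestrict

end PartialSums

section CircleRep

instance : IsProbabilityMeasure (volume : Measure UnitAddCircle) := ⟨UnitAddCircle.measure_univ⟩

/-- The representative in `[0, 1)` of a point of the circle `ℝ / ℤ`. -/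
noncomputable def circleRep (x : UnitAddCircle) : ℝ := AddCircle.equivIco 1 0 x

lemma circleRep_nonneg (x : UnitAddCircle) : 0 ≤ circleRep x := (AddCircle.equivIco 1 0 x).2.1

lemma circleRep_lt_one (x : UnitAddCircle) : circleRep x < 1 := by
  simpa [circleRep] using (AddCircle.equivIco (1 : ℝ) 0 x).2.2

lemma coe_circleRep (x : UnitAddCircle) : (circleRep x : UnitAddCircle) = x :=
  AddCircle.coe_equivIco

lemma circleRep_coe (a : ℝ) : circleRep a = Int.fract a := by
  simpa only [circleRep, div_one, mul_one] using AddCircle.coe_equivIco_mk_apply (1 : ℝ) a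

lemma measurable_circleRep : Measurable circleRep :=
  measurable_subtype_coe.comp (AddCircle.measurableEquivIco 1 0).measurable

lemma circleRep_add_eq_fract (x u : UnitAddCircle) :
    circleRep (x + u) = Int.fract (circleRep x + circleRep u) := by
  rw [← circleRep_coe, AddCircle.coe_add, coe_circleRep, coe_circleRep]

lemma circleRep_add_circleRep (x u : UnitAddCircle) :
    circleRep x + circleRep u =
      circleRep (x + u) + if circleRep (x + u) < circleRep x then 1 else 0 := by
  have hx := circleRep_nonneg x
  have hx' := circleRep_lt_one x
  have hu := circleRep_nonneg u
  have hu' := circleRep_lt_one u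
  rw [circleRep_add_eq_fract]
  rcases lt_or_ge (circleRep x + circleRep u) 1 with hno_carry | hcarry
  · rw [Int.fract_eq_self.2 ⟨by positivity, hno_carry⟩, if_neg (by linarith), add_zero]
  · have hfract : Int.fract (circleRep x + circleRep u) = circleRep x + circleRep u - 1 :=
      Int.fract_eq_iff.2 ⟨by linarith, by linarith, 1, by simp⟩
    rw [hfract, if_pos (by linarith), sub_add_cancel]

lemma measurePreserving_circleRep :
    MeasurePreserving circleRep volume (volume.restrict (Set.Ico 0 1)) := by
  refine ⟨measurable_circleRep, ?_⟩
  rw [← (UnitAddCircle.measurePreserving_mk 0).map_eq, zero_add, ← restrict_Ico_eq_restrict_Ioc,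
    Measure.map_map measurable_circleRep AddCircle.measurable_mk']
  have hid : circleRep ∘ ((↑) : ℝ → UnitAddCircle) =ᵐ[volume.restrict (Set.Ico 0 1)] id := by
    filter_upwards [ae_restrict_mem measurableSet_Ico] with a ha
    exact (circleRep_coe a).trans (Int.fract_eq_self.2 ha)
  rw [Measure.map_congr hid, Measure.map_id]

lemma integral_circleRep_pow (k : ℕ) : ∫ x, circleRep x ^ k = 1 / (k + 1) := by
  calc ∫ x, circleRep x ^ k = ∫ a in Set.Ico (0 : ℝ) 1, a ^ k :=
        measurePreserving_circleRep.hasLaw.integral_comp (f := fun a => a ^ k) (by fun_prop)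
    _ = ∫ a in (0 : ℝ)..1, a ^ k := by
        rw [integral_Ico_eq_integral_Ioc, intervalIntegral.integral_of_le zero_le_one]
    _ = 1 / (k + 1) := by simp

lemma memLp_circleRep : MemLp circleRep 2 volume := by
  refine .of_bound measurable_circleRep.aestronglyMeasurable 1 (ae_of_all _ fun x => ?_)
  rw [Real.norm_of_nonneg (circleRep_nonneg x)]
  exact (circleRep_lt_one x).le

lemma integral_circleRep : ∫ x, circleRep x = 1 / 2 := by
  simpa [one_add_one_eq_two] using integral_circleRep_pow 1

lemma variance_circleRep : Var[circleRep] = 1 / 12 := by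
  rw [variance_eq_sub memLp_circleRep, integral_circleRep]
  simp only [Pi.pow_apply, integral_circleRep_pow]
  norm_num

/-- The first `n` partial sums of a sequence of points of the circle, represented in `[0, 1)`. -/
noncomputable def circleWalk (n : ℕ) (ω : ℕ → UnitAddCircle) (i : Fin n) : ℝ :=
  circleRep (∑ j ∈ range (i + 1), ω j)

lemma measurePreserving_circleWalk (n : ℕ) :
    MeasurePreserving (circleWalk n) (Measure.infinitePi fun _ => volume)
      (Measure.pi fun _ => (volume : Measure ℝ).restrict (Set.Ico 0 1)) :=
  have : IsProbabilityMeasure ((volume : Measure ℝ).restrict (Set.Ico 0 1)) := ⟨by simp⟩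
  (measurePreserving_pi _ _ fun _ => measurePreserving_circleRep).comp
    (measurePreserving_sum_range volume)

lemma sum_circleRep (ω : ℕ → UnitAddCircle) (m : ℕ) :
    ∑ k ∈ range (m + 1), circleRep (ω k) = circleRep (∑ j ∈ range (m + 1), ω j) +
      seqDescentCount (circleWalk (m + 1) ω) := by
  unfold circleWalk
  rw [seqDescentCount_natCast fun k => circleRep (∑ j ∈ range (k + 1), ω j), ← sum_boole]
  induction m with
  | zero => simp
  | succ m ih =>
    have hcarry := circleRep_add_circleRep (∑ j ∈ range (m + 1), ω j) (ω (m + 1))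
    rw [← sum_range_succ] at hcarry
    rw [sum_range_succ (M := ℝ), ih, sum_range_succ (M := ℝ)]
    linarith

lemma abs_sum_circleRep_sub_seqDescentCount_circleWalk_le (ω : ℕ → UnitAddCircle) (n : ℕ) :
    |∑ k ∈ range n, circleRep (ω k) - seqDescentCount (circleWalk n ω)| ≤ 1 := by
  obtain _ | m := n
  · simp [seqDescentCount]
  · rw [sum_circleRep, add_sub_cancel_right, abs_of_nonneg (circleRep_nonneg _)]
    exact (circleRep_lt_one _).le

end CircleRep

section CentralLimit

lemma tendstoInDistribution_inv_sqrt_mul_sum_infinitePi {E : Type*} [MeasurableSpace E]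
    {ν : Measure E} [IsProbabilityMeasure ν] {f : E → ℝ} (hf : Measurable f) (hf₂ : MemLp f 2 ν) :
    TendstoInDistribution
      (fun (n : ℕ) (ω : ℕ → E) => (√n)⁻¹ * (∑ k ∈ range n, f (ω k) - n * ν[f]))
      atTop id (fun _ => Measure.infinitePi fun _ => ν) (gaussianReal 0 Var[f; ν].toNNReal) := by
  have hident (i : ℕ) :
      IdentDistrib (fun ω : ℕ → E => f (ω i)) f (Measure.infinitePi fun _ => ν) ν :=
    (IdentDistrib.mk (measurable_pi_apply i).aemeasurable aemeasurable_id (by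
      rw [(measurePreserving_eval_infinitePi _ i).map_eq, Measure.map_id])).comp hf
  rw [← (hident 0).integral_eq, ← (hident 0).variance_eq]
  exact tendstoInDistribution_inv_sqrt_mul_sum_sub .id ((hident 0).memLp_iff.2 hf₂)
    (iIndepFun_infinitePi fun _ => hf) fun i => (hident i).trans (hident 0).symm

lemma abs_normalized_seqDescentCount_circleWalk_sub_le (ω : ℕ → UnitAddCircle) (n : ℕ) :
    |(seqDescentCount (circleWalk n ω) - n / 2) / √n -
      (√n)⁻¹ * (∑ k ∈ range n, circleRep (ω k) - n * (1 / 2))| ≤ (√n)⁻¹ := by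
  rw [div_eq_inv_mul, ← mul_sub, mul_one_div, sub_sub_sub_cancel_right, abs_mul, abs_sub_comm,
    abs_of_nonneg (inv_nonneg.2 (Real.sqrt_nonneg n))]
  exact mul_le_of_le_one_right (by positivity)
    (abs_sum_circleRep_sub_seqDescentCount_circleWalk_le ω n)

lemma tendstoInDistribution_seqDescentCount_circleWalk :
    TendstoInDistribution
      (fun (n : ℕ) ω => (seqDescentCount (circleWalk n ω) - n / 2) / √n)
      atTop id (fun _ => Measure.infinitePi fun _ => volume) (gaussianReal 0 (1 / 12)) := by
  have hclt :=
    tendstoInDistribution_inv_sqrt_mul_sum_infinitePi measurable_circleRep memLp_circleRep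
  have hvar : (1 / 12 : ℝ).toNNReal = 1 / 12 := by ext; simp
  rw [integral_circleRep, variance_circleRep, hvar] at hclt
  have hmeas (n : ℕ) : Measurable fun ω => (seqDescentCount (circleWalk n ω) - n / 2) / √n :=
    (measurable_of_countable fun k : ℕ => (k - n / 2) / √n).comp
      (measurable_seqDescentCount.comp (measurePreserving_circleWalk n).measurable)
  refine tendstoInDistribution_of_tendstoInMeasure_sub _ _ hclt
    (tendstoInMeasure_of_tendsto_ae (fun n => ?_) (ae_of_all _ fun ω => ?_))
    fun n => (hmeas n).aemeasurable
  · exact ((hmeas n).aemeasurable.sub (hclt.forall_aemeasurable n)).aestronglyMeasurable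
  · refine squeeze_zero_norm (fun n => ?_)
      (tendsto_inv_atTop_zero.comp (Real.tendsto_sqrt_atTop.comp tendsto_natCast_atTop_atTop))
    exact abs_normalized_seqDescentCount_circleWalk_sub_le ω n

lemma integral_comp_seqDescentCount_circleWalk (n : ℕ) (F : ℕ → ℝ) :
    ∫ ω, F (seqDescentCount (circleWalk n ω)) ∂Measure.infinitePi (fun _ => volume) =
      𝔼 τ : Equiv.Perm (Fin n), F (descentCount τ) := by
  have : IsProbabilityMeasure ((volume : Measure ℝ).restrict (Set.Ico 0 1)) := ⟨by simp⟩
  rw [← integral_comp_seqDescentCount_pi ((volume : Measure ℝ).restrict (Set.Ico 0 1))]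
  exact (measurePreserving_circleWalk n).hasLaw.integral_comp
    (integrable_comp_seqDescentCount _ F).aestronglyMeasurable

lemma tendsto_expect_descentCount (g : ℝ →ᵇ ℝ) :
    Tendsto (fun n : ℕ => 𝔼 τ : Equiv.Perm (Fin n), g ((descentCount τ - n / 2) / √n)) atTop
      (𝓝 (∫ x, g x ∂gaussianReal 0 (1 / 12))) := by
  have hconv := tendstoInDistribution_seqDescentCount_circleWalk
  have hg := ProbabilityMeasure.tendsto_iff_forall_integral_tendsto.1 hconv.tendsto g
  simp only [ProbabilityMeasure.coe_mk, Measure.map_id] at hg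
  refine hg.congr fun n => ?_
  rw [integral_map (hconv.forall_aemeasurable n) g.continuous.aestronglyMeasurable]
  exact integral_comp_seqDescentCount_circleWalk n fun k => g ((k - n / 2) / √n)

end CentralLimit

section LipschitzTest

lemma exists_probabilityMeasure_integral_eq_expect {α : Type*} [Fintype α] [Nonempty α]
    (X : α → ℝ) :
    ∃ μ : ProbabilityMeasure ℝ, ∀ g : ℝ →ᵇ ℝ, ∫ x, g x ∂(μ : Measure ℝ) = 𝔼 a, g (X a) := by
  let _ : MeasurableSpace α := ⊤
  have hX : Measurable X := measurable_from_top
  refine ⟨⟨(PMF.uniformOfFintype α).toMeasure.map X,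
    Measure.isProbabilityMeasure_map hX.aemeasurable⟩, fun g => ?_⟩
  rw [ProbabilityMeasure.coe_mk, integral_map hX.aemeasurable g.continuous.aestronglyMeasurable,
    PMF.integral_eq_sum, Fintype.expect_eq_sum_div_card, sum_div]
  simp [div_eq_inv_mul]

lemma tendsto_expect_of_forall_lipschitz {α : ℕ → Type*} [∀ n, Fintype (α n)]
    [∀ n, Nonempty (α n)] (X : ∀ n, α n → ℝ) (μ : Measure ℝ) [IsProbabilityMeasure μ]
    (h : ∀ (f : ℝ →ᵇ ℝ) (K : ℝ≥0), LipschitzWith K f →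
      Tendsto (fun n => 𝔼 a, f (X n a)) atTop (𝓝 (∫ x, f x ∂μ))) (g : ℝ →ᵇ ℝ) :
    Tendsto (fun n => 𝔼 a, g (X n a)) atTop (𝓝 (∫ x, g x ∂μ)) := by
  choose law hlaw using fun n => exists_probabilityMeasure_integral_eq_expect (X n)
  let limit : ProbabilityMeasure ℝ := ⟨μ, inferInstance⟩
  have hconv : Tendsto law atTop (𝓝 limit) := by
    rw [tendsto_iff_forall_lipschitz_integral_tendsto]
    rintro f ⟨C, hC⟩ ⟨K, hK⟩
    let f' : ℝ →ᵇ ℝ := .mkOfBound ⟨f, hK.continuous⟩ C hC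
    exact (h f' K hK).congr fun n => (hlaw n f').symm
  simpa only [hlaw, limit, ProbabilityMeasure.coe_mk] using
    ProbabilityMeasure.tendsto_iff_forall_integral_tendsto.1 hconv g

end LipschitzTest

lemma lipschitzWith_sub_div (a b : ℝ) : LipschitzWith ‖b‖₊⁻¹ fun x : ℝ => (x - a) / b := by
  refine LipschitzWith.of_dist_le_mul fun x y => le_of_eq ?_
  rw [Real.dist_eq, Real.dist_eq, ← sub_div, sub_sub_sub_cancel_right, abs_div]
  simp [div_eq_inv_mul]

lemma sqrt_mul_exp_neg_div_le {x c r : ℝ} (hx : 0 < x) (hr : x * Real.log x / 2 + c * x ≤ r) :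
    √x * Real.exp (-(r / x)) ≤ Real.exp (-c) := by
  have hsqrt : √x = Real.exp (Real.log x / 2) := by
    rw [← Real.log_sqrt hx.le, Real.exp_log (Real.sqrt_pos.2 hx)]
  have hdiv : Real.log x / 2 + c ≤ r / x := by
    rw [le_div_iff₀ hx]
    linarith
  rw [hsqrt, ← Real.exp_add, Real.exp_le_exp]
  linarith

lemma unifExpect_eq_expect {α : Type*} [Fintype α] (f : α → ℝ) : unifExpect f = 𝔼 x, f x :=
  (Fintype.expect_eq_sum_div_card f).symm

lemma abs_expect_normalized_descentCount_rttPerm_sub_le {n r : ℕ} [NeZero n] {c : ℝ}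
    (hr : n * Real.log n / 2 + c * n ≤ r) {f : ℝ → ℝ} {K : ℝ≥0} (hf : LipschitzWith K f) :
    |(𝔼 s, f ((descentCount (rttPerm n r s) - n / 2) / √n)) -
      𝔼 τ : Equiv.Perm (Fin n), f ((descentCount τ - n / 2) / √n)| ≤ K * Real.exp (-c) := by
  have hn : (0 : ℝ) < n := mod_cast NeZero.pos n
  calc _ ≤ (K * ‖√(n : ℝ)‖₊⁻¹ : ℝ≥0) * (n * Real.exp (-(r / n))) :=
        abs_expect_descentCount_rttPerm_sub_le (hf.comp (lipschitzWith_sub_div (n / 2) √n))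
    _ = K * (√n * Real.exp (-(r / n))) := by
        have hsqrt : (√(n : ℝ))⁻¹ * n = √n := by rw [inv_mul_eq_div, Real.div_sqrt]
        rw [NNReal.coe_mul, NNReal.coe_inv, coe_nnnorm, Real.norm_of_nonneg (Real.sqrt_nonneg _),
          mul_assoc, ← mul_assoc _ (n : ℝ), hsqrt]
    _ ≤ K * Real.exp (-c) := by
        gcongr
        exact sqrt_mul_exp_neg_div_le hn hr

/-- **Theorem (descents, mixed regime).** If `(r n)` are positive integers with
`r n ≥ (n log n)/2 + cₙ n` for some sequence `cₙ → ∞`, then `(D - n/2)/√n` converges in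
distribution (tested against every bounded continuous function) to `N(0, 1/12)`. -/
theorem rtt_descents_mixed (r : ℕ → ℕ) (hrpos : ∀ n, 0 < r n) (cseq : ℕ → ℝ)
    (hcseq : Tendsto cseq atTop atTop)
    (hr : ∀ n : ℕ, (n : ℝ) * Real.log n / 2 + cseq n * n ≤ (r n : ℝ)) :
    ∀ g : BoundedContinuousFunction ℝ ℝ,
      Tendsto
        (fun n : ℕ =>
          unifExpect (fun s : Fin (r n) → Fin n =>
            g (((descentCount (rttPerm n (r n) s) : ℝ) - (n : ℝ) / 2) / Real.sqrt n)))
        atTop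
        (𝓝 (∫ x, g x ∂(gaussianReal 0 (1 / 12 : ℝ≥0)))) := by
  intro g
  rw [← tendsto_add_atTop_iff_nat 1]
  simp only [unifExpect_eq_expect]
  refine tendsto_expect_of_forall_lipschitz _ _ (fun f K hf => ?_) g
  have hbound : Tendsto (fun m => K * Real.exp (-cseq (m + 1))) atTop (𝓝 0) := by
    simpa using ((tendsto_add_atTop_iff_nat 1).2
      (Real.tendsto_exp_neg_atTop_nhds_zero.comp hcseq)).const_mul (K : ℝ)
  refine tendsto_of_tendsto_of_dist
    ((tendsto_add_atTop_iff_nat 1).2 (tendsto_expect_descentCount f))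
    (squeeze_zero (fun _ => dist_nonneg) (fun m => ?_) hbound)
  rw [dist_comm]
  exact abs_expect_normalized_descentCount_rttPerm_sub_le (hr (m + 1)) hf
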